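/- Let L ≥ 1 and nonnegative integers a_1, a_2 be given, set K = L + a_1 + a_2 + 1 (the (a_2,a_1)_L-bar-ICP with i = 2), and suppose that a_1 + a_2 + 2 divides K. Then the optimal broadcast rate R* of the (a_2,a_1)_L-bar-ICP equals exactly a_1 + a_2 + 2. -/

import Mathlib

open Finset

/-- `<m>_n`: the unique element of `{1,…,n}` congruent to `m` modulo `n`. -/
def angMod (m : ℤ) (n : ℕ) : ℕ :=
  if m % (n : ℤ) = 0 then n else (m % (n : ℤ)).toNat

/-- Message indices of the bar-ICP: pairs in `[K] × [i]`. -/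
abbrev Msg (K i : ℕ) : Type :=
  {p : ℕ × ℕ // p.1 ∈ Finset.Icc 1 K ∧ p.2 ∈ Finset.Icc 1 i}

/-- Users of the bar-ICP: elements of `[K]`. -/
abbrev User (K : ℕ) : Type := {k : ℕ // k ∈ Finset.Icc 1 K}

/-- The side-information index set `K_k` of user `k` in the
`(a_i,…,a_1)_L`-bar-ICP, as a set of pairs `(b,t)`. -/
def knownIdx (K i L : ℕ) (a : ℕ → ℕ) (k : ℕ) : Set (ℕ × ℕ) :=
  {p | ∃ t ∈ Finset.Icc 1 i, ∃ v ∈ Finset.Icc 1 (i - 1), ∃ r ∈ Finset.Icc 1 L,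
    p.2 = t ∧
    p.1 = angMod ((k : ℤ) + (∑ j ∈ Finset.Icc 1 v, (a (angMod ((i : ℤ) + (t : ℤ) - (j : ℤ)) i) : ℤ))
        + ((v : ℤ) - 1) * (L : ℤ) + (r : ℤ)) K}

/-- Want set of user `u` in the bar-ICP: the messages `(u,t)`, `t ∈ [i]`. -/
def barWant (K i : ℕ) (u : User K) : Set (Msg K i) :=
  {p | p.1.1 = u.1}

/-- Known set of user `u` in the bar-ICP. -/
def barKnown (K i L : ℕ) (a : ℕ → ℕ) (u : User K) : Set (Msg K i) :=
  {p | p.1 ∈ knownIdx K i L a u.1}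

/-- A valid index code of length `ℓ` for message length `t` for the index coding
problem with message index set `I`, users `U`, want sets `W` and known sets `Kn`. -/
def ValidCode {I U : Type} (W Kn : U → Set I) (t ℓ : ℕ) : Prop :=
  ∃ E : (I → Fin t → Bool) → Fin ℓ → Bool,
  ∃ D : ∀ u : U, (Fin ℓ → Bool) → (↥(Kn u) → Fin t → Bool) → (↥(W u) → Fin t → Bool),
    ∀ x : I → Fin t → Bool, ∀ u : U,
      D u (E x) (fun m => x m.1) = fun m => x m.1

/-- The optimal broadcast rate of an index coding problem. -/
noncomputable def optRate {I U : Type} (W Kn : U → Set I) : ℝ :=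
  sInf {ρ : ℝ | ∃ t ℓ : ℕ, 1 ≤ t ∧ ValidCode W Kn t ℓ ∧ ρ = (ℓ : ℝ) / (t : ℝ)}

/-!
Index coding has two matching combinatorial bounds. If the messages split into `n` classes such that
whoever wants a message knows the rest of its class, then broadcasting the `n` class sums is enough.
Conversely, if the messages of a set `S` can be ordered so that whoever wants one of them knows only
earlier ones among `S`, then fixing all other messages to `0` makes the encoder injective on `S`,
so that `#S` symbols are necessary.

For `i = 2` the messages of type `t` unknown to user `k` are the `(k + e, t)` with
`-a_t ≤ e ≤ a_{3-t}`, positions modulo `K`. Put `n = a_1 + a_2 + 2`. When `n ∣ K`, sort the messages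
`(b, t)` by the residue of `b + (t - 1)(a_2 + 1)` modulo `n`: if `(k + e, t)` had the residue of
`(k, s)`, then `n` would divide `e + (t - s)(a_2 + 1)`, which lies strictly between `-n` and `n` and
vanishes only for `e = 0`, `t = s`. So these `n` classes are as above. The set `S` consists of the
messages `(b, t)` with `b ≤ a_{3-t} + 1`, ordered by `b`.
-/

/-- Unique decodability of an encoder `E` with alphabet `M` and codewords in `C`: the codeword and
the side information of a user determine the messages this user wants. -/
def IsDecodable {I U M C : Type*} (W Kn : U → Set I) (E : (I → M) → C) : Prop :=
  ∀ u x y, E x = E y → Set.EqOn x y (Kn u) → Set.EqOn x y (W u)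

/-- A clique cover of an index coding problem, as a map `c` sending each message to its clique:
whoever wants a message knows all other messages of its clique. -/
def IsCliqueCover {I U κ : Type*} (W Kn : U → Set I) (c : I → κ) : Prop :=
  ∀ u, ∀ m ∈ W u, ∀ m', m' ≠ m → c m' = c m → m' ∈ Kn u

/-- An acyclic set of messages, from which the lower bound on the code length comes. Acyclicity is
encoded by a rank function: each message of `S` is wanted by a user whose side information
within `S` has smaller rank. -/
def IsAcyclicSet {I U : Type*} (W Kn : U → Set I) (S : Finset I) : Prop :=
  ∃ rank : I → ℕ, ∀ m ∈ S, ∃ u, m ∈ W u ∧ ∀ m' ∈ S, m' ∈ Kn u → rank m' < rank m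

section Encoders

variable {I U M C C' κ : Type*} {W Kn : U → Set I} {S : Finset I}

theorem IsCliqueCover.isDecodable_sum [Fintype I] [DecidableEq κ] [AddCommGroup M]
    {c : I → κ} (hc : IsCliqueCover W Kn c) :
    IsDecodable W Kn (fun (x : I → M) k => ∑ m with c m = k, x m) := by
  intro u x y hE hKn m hm
  have difference : ∑ m' with c m' = c m, (x m' - y m') = x m - y m :=
    sum_eq_single_of_mem m (by simp) fun m' hm' hne =>
      sub_eq_zero.2 (hKn (hc u m hm m' hne (mem_filter.1 hm').2))
  rw [sum_sub_distrib, sub_eq_zero.2 (congrFun hE (c m))] at difference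
  exact sub_eq_zero.1 difference.symm

theorem IsDecodable.postcomp {E : (I → M) → C} (hE : IsDecodable W Kn E)
    {g : C → C'} (hg : Function.Injective g) : IsDecodable W Kn (g ∘ E) :=
  fun u x y h => hE u x y (hg h)

theorem IsAcyclicSet.eq_of_encode_eq {E : (I → M) → C} (hS : IsAcyclicSet W Kn S)
    (hE : IsDecodable W Kn E) {x y : I → M} (hxy : E x = E y) (hSc : Set.EqOn x y (S : Set I)ᶜ) :
    x = y := by
  obtain ⟨rank, hrank⟩ := hS
  suffices agree : ∀ n, ∀ m ∈ S, rank m = n → x m = y m by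
    funext m
    by_cases hm : m ∈ S
    · exact agree _ m hm rfl
    · exact hSc hm
  intro n
  induction n using Nat.strong_induction_on with
  | _ n ih =>
    rintro m hm rfl
    obtain ⟨u, hmu, hlt⟩ := hrank m hm
    refine hE u x y hxy (fun m' hm' => ?_) hmu
    by_cases hmS : m' ∈ S
    · exact ih _ (hlt m' hmS hm') m' hmS rfl
    · exact hSc hmS

theorem IsAcyclicSet.card_pow_le_card [Fintype M] [Fintype C] [Nonempty M]
    {E : (I → M) → C} (hS : IsAcyclicSet W Kn S) (hE : IsDecodable W Kn E) :
    Fintype.card M ^ #S ≤ Fintype.card C := by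
  classical
  let padded (z : S → M) : I → M :=
    Function.extend Subtype.val z fun _ => Classical.arbitrary M
  have padded_apply (z : S → M) (m : S) : padded z m = z m :=
    Subtype.val_injective.extend_apply z _ m
  have padded_of_notMem (z : S → M) {m : I} (hm : m ∉ S) : padded z m = Classical.arbitrary M :=
    Function.extend_apply' _ _ _ fun ⟨m', h⟩ => hm (h ▸ m'.2)
  have injective : Function.Injective (E ∘ padded) := fun z z' h => by
    have heq : padded z = padded z' := hS.eq_of_encode_eq hE h fun m hm => by
      rw [padded_of_notMem z hm, padded_of_notMem z' hm]
    funext m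
    rw [← padded_apply z, heq, padded_apply]
  simpa using Fintype.card_le_of_injective _ injective

end Encoders

section Codes

variable {I U : Type} {κ : Type*} {W Kn : U → Set I} {S : Finset I}

theorem validCode_iff_exists_isDecodable {t ℓ : ℕ} :
    ValidCode W Kn t ℓ ↔
      ∃ E : (I → Fin t → Bool) → Fin ℓ → Bool, IsDecodable W Kn E := by
  constructor
  · rintro ⟨E, D, hD⟩
    refine ⟨E, fun u x y hE hKn => Set.domRestrict_eq_domRestrict_iff.1 ?_⟩
    calc (W u).domRestrict x = D u (E x) ((Kn u).domRestrict x) := (hD x u).symm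
      _ = D u (E y) ((Kn u).domRestrict y) := by rw [hE, Set.domRestrict_eq_domRestrict_iff.2 hKn]
      _ = (W u).domRestrict y := hD y u
  · rintro ⟨E, hE⟩
    have factors (u : U) : Function.FactorsThrough (W u).domRestrict
        (fun x : I → Fin t → Bool => (E x, (Kn u).domRestrict x)) := fun x y hxy =>
      Set.domRestrict_eq_domRestrict_iff.2 <| hE u x y (congrArg Prod.fst hxy) <|
        Set.domRestrict_eq_domRestrict_iff.1 (congrArg Prod.snd hxy)
    choose D hD using fun u => (Function.factorsThrough_iff _).1 (factors u)
    exact ⟨E, fun u c s => D u (c, s), fun x u => (congrFun (hD u) x).symm⟩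

theorem IsCliqueCover.validCode [Finite I] [Fintype κ] {c : I → κ}
    (hc : IsCliqueCover W Kn c) (t : ℕ) : ValidCode W Kn t (Fintype.card κ * t) := by
  classical
  have := Fintype.ofFinite I
  have card_symbols : Fintype.card (κ × Fin t) = Fintype.card κ * t := by simp
  let flatten : (κ → Fin t → Bool) ≃ (Fin (Fintype.card κ * t) → Bool) :=
    (Equiv.curry κ (Fin t) Bool).symm.trans
      ((Fintype.equivFinOfCardEq card_symbols).arrowCongr (Equiv.refl Bool))
  -- The clique sums are bitwise XORs: `Bool` is an additive group as a `BooleanRing`.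
  exact validCode_iff_exists_isDecodable.2
    ⟨_, hc.isDecodable_sum.postcomp flatten.injective⟩

theorem IsAcyclicSet.card_mul_le {t ℓ : ℕ} (hS : IsAcyclicSet W Kn S)
    (hcode : ValidCode W Kn t ℓ) : #S * t ≤ ℓ := by
  obtain ⟨E, hE⟩ := validCode_iff_exists_isDecodable.1 hcode
  have hpow := hS.card_pow_le_card hE
  simp only [Fintype.card_fun, Fintype.card_bool, Fintype.card_fin, ← pow_mul] at hpow
  rw [mul_comm]
  exact (Nat.pow_le_pow_iff_right one_lt_two).1 hpow

theorem IsAcyclicSet.optRate_eq_card [Finite I] [Fintype κ] {c : I → κ}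
    (hS : IsAcyclicSet W Kn S) (hc : IsCliqueCover W Kn c) (hcard : Fintype.card κ = #S) :
    optRate W Kn = #S := by
  refine IsLeast.csInf_eq ⟨⟨1, #S * 1, le_rfl, hcard ▸ hc.validCode 1, by simp⟩, ?_⟩
  rintro _ ⟨t, ℓ, ht, hcode, rfl⟩
  rw [le_div_iff₀ (by exact_mod_cast ht)]
  exact_mod_cast hS.card_mul_le hcode

end Codes

section Residues

theorem angMod_mem_Icc (m : ℤ) {n : ℕ} (hn : 0 < n) : angMod m n ∈ Icc 1 n := by
  have hnonneg : 0 ≤ m % (n : ℤ) := Int.emod_nonneg _ (by omega)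
  have hlt : m % (n : ℤ) < n := Int.emod_lt_of_pos _ (by omega)
  rw [mem_Icc, angMod]
  split_ifs <;> omega

theorem angMod_modEq (m : ℤ) {n : ℕ} (hn : 0 < n) : (angMod m n : ℤ) ≡ m [ZMOD n] := by
  have hnonneg : 0 ≤ m % (n : ℤ) := Int.emod_nonneg _ (by omega)
  unfold angMod Int.ModEq
  split_ifs with h
  · simp [h]
  · rw [Int.toNat_of_nonneg hnonneg, Int.emod_emod]

theorem eq_of_modEq_of_mem_Icc {b c n : ℕ} (hb : b ∈ Icc 1 n) (hc : c ∈ Icc 1 n)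
    (h : (b : ℤ) ≡ c [ZMOD n]) : b = c := by
  rw [mem_Icc] at hb hc
  have := Int.eq_zero_of_abs_lt_dvd h.dvd (by rw [abs_lt]; omega)
  omega

theorem eq_angMod_iff {b n : ℕ} {m : ℤ} (hb : b ∈ Icc 1 n) :
    b = angMod m n ↔ (b : ℤ) ≡ m [ZMOD n] := by
  have hn : 0 < n := by rw [mem_Icc] at hb; omega
  refine ⟨fun h => h ▸ angMod_modEq m hn, fun h => ?_⟩
  exact eq_of_modEq_of_mem_Icc hb (angMod_mem_Icc m hn) (h.trans (angMod_modEq m hn).symm)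

theorem exists_mem_Ico_modEq_iff_not {n : ℤ} (hn : 0 < n) (x lo mid : ℤ) :
    (∃ e ∈ Set.Ico lo mid, x ≡ e [ZMOD n]) ↔
      ¬ ∃ e ∈ Set.Ico mid (lo + n), x ≡ e [ZMOD n] := by
  constructor
  · rintro ⟨e, ⟨hlo, hmid⟩, he⟩ ⟨e', ⟨hmid', hhi⟩, he'⟩
    have := Int.eq_zero_of_abs_lt_dvd (he.symm.trans he').dvd (by rw [abs_lt]; omega)
    omega
  · intro hnot
    obtain ⟨z, hz, hzn, hmod⟩ := Int.existsUnique_equiv (x - lo) hn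
    have hx : x ≡ lo + z [ZMOD n] := by simpa using (hmod.add_left lo).symm
    exact ⟨lo + z, ⟨by omega, not_le.1 fun hmid => hnot ⟨lo + z, ⟨hmid, by omega⟩, hx⟩⟩, hx⟩

end Residues

section BarICP

instance (K i : ℕ) : Finite (Msg K i) :=
  (Icc 1 K ×ˢ Icc 1 i).finite_toSet.subset fun _ hp => mem_coe.2 (mem_product.2 hp)

variable {K L : ℕ} {a : ℕ → ℕ}

theorem mem_knownIdx_two_iff {b k t : ℕ} (hb : b ∈ Icc 1 K) (ht : t ∈ Icc 1 2) :
    (b, t) ∈ knownIdx K 2 L a k ↔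
      ∃ e ∈ Set.Ico ((a (3 - t) : ℤ) + 1) (a (3 - t) + 1 + L), (b : ℤ) - k ≡ e [ZMOD K] := by
  have hindex : angMod ((2 : ℕ) + (t : ℤ) - (1 : ℕ)) 2 = 3 - t := by
    rw [mem_Icc] at ht
    rw [eq_comm, eq_angMod_iff (by rw [mem_Icc]; omega), Int.modEq_iff_dvd]
    omega
  have hposition (r : ℤ) :
      b = angMod (k + (a (3 - t) : ℤ) + ((1 : ℕ) - 1) * (L : ℤ) + r) K ↔
        (b : ℤ) - k ≡ a (3 - t) + r [ZMOD K] := by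
    rw [eq_angMod_iff hb, Int.modEq_iff_dvd, Int.modEq_iff_dvd]
    push_cast
    ring_nf
  constructor
  · rintro ⟨_, -, v, hv, r, hr, rfl, hbr⟩
    obtain rfl : v = 1 := by simpa using hv
    rw [Icc_self, sum_singleton, hindex] at hbr
    rw [mem_Icc] at hr
    exact ⟨a (3 - t) + r, ⟨by omega, by omega⟩, (hposition r).1 hbr⟩
  · rintro ⟨e, ⟨hlo, hhi⟩, he⟩
    refine ⟨t, ht, 1, by simp, (e - a (3 - t)).toNat, by rw [mem_Icc]; omega, rfl, ?_⟩
    rw [Icc_self, sum_singleton, hindex, Int.toNat_of_nonneg (by omega), hposition]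
    simpa using he

theorem notMem_knownIdx_two_iff (hK : K = L + a 1 + a 2 + 1) {b k t : ℕ} (hb : b ∈ Icc 1 K)
    (ht : t ∈ Icc 1 2) :
    (b, t) ∉ knownIdx K 2 L a k ↔
      ∃ e ∈ Set.Ico (-a t : ℤ) (a (3 - t) + 1), (b : ℤ) - k ≡ e [ZMOD K] := by
  have hwindow : (a (3 - t) : ℤ) + 1 + L = -a t + K := by
    rw [mem_Icc] at ht
    obtain rfl | rfl : t = 1 ∨ t = 2 := by omega
    all_goals simp only [Nat.reduceSub]; omega
  rw [mem_knownIdx_two_iff hb ht, hwindow,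
    ← exists_mem_Ico_modEq_iff_not (by rw [mem_Icc] at hb; omega)]

/-- The clique of a message `(b, t)` of the bar-ICP with `i = 2`, that is, the code symbol in which
it takes part. The shift by `a 2 + 1` for `t = 2` moves each window of unknown messages of the
other type into nonzero residues. -/
def barClique (K : ℕ) (a : ℕ → ℕ) (m : Msg K 2) : ZMod (a 1 + a 2 + 2) :=
  ((m.1.1 + (m.1.2 - 1) * (a 2 + 1) : ℤ) : ZMod (a 1 + a 2 + 2))

theorem barClique_eq_iff {m m' : Msg K 2} :
    barClique K a m = barClique K a m' ↔
      (m.1.1 + (m.1.2 - 1) * (a 2 + 1) : ℤ) ≡ m'.1.1 + (m'.1.2 - 1) * (a 2 + 1)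
        [ZMOD (a 1 + a 2 + 2 : ℕ)] :=
  ZMod.intCast_eq_intCast_iff _ _ _

theorem eq_zero_and_eq_of_mem_window_of_dvd {s t : ℕ} {e : ℤ} (hs : s ∈ Icc 1 2) (ht : t ∈ Icc 1 2)
    (he : e ∈ Set.Ico (-a t : ℤ) (a (3 - t) + 1))
    (hdvd : ((a 1 + a 2 + 2 : ℕ) : ℤ) ∣ e + (t - s) * (a 2 + 1)) : e = 0 ∧ t = s := by
  obtain ⟨hlo, hhi⟩ := he
  rw [mem_Icc] at hs ht
  obtain rfl | rfl : s = 1 ∨ s = 2 := by omega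
  all_goals obtain rfl | rfl : t = 1 ∨ t = 2 := by omega
  all_goals
    simp only [Nat.reduceSub] at hhi
    have := Int.eq_zero_of_abs_lt_dvd hdvd (by rw [abs_lt]; push_cast; omega)
    push_cast at this
    omega

theorem isCliqueCover_barClique (hK : K = L + a 1 + a 2 + 1) (hdvd : a 1 + a 2 + 2 ∣ K) :
    IsCliqueCover (barWant K 2) (barKnown K 2 L a) (barClique K a) := by
  rintro ⟨_, hk⟩ ⟨⟨k, s⟩, _, hs⟩ rfl ⟨⟨b, t⟩, hb, ht⟩ hne hclique
  dsimp only at hk hs hb ht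
  by_contra hunknown
  obtain ⟨e, hwindow, he⟩ := (notMem_knownIdx_two_iff hK hb ht).1 hunknown
  have hen : (b : ℤ) - k ≡ e [ZMOD (a 1 + a 2 + 2 : ℕ)] := he.of_dvd (by exact_mod_cast hdvd)
  have hclass : (k + (s - 1) * (a 2 + 1) : ℤ) ≡ b + (t - 1) * (a 2 + 1)
      [ZMOD (a 1 + a 2 + 2 : ℕ)] := (barClique_eq_iff.1 hclique).symm
  have hmultiple : ((a 1 + a 2 + 2 : ℕ) : ℤ) ∣ e + (t - s) * (a 2 + 1) := by
    rw [show e + (t - s) * (a 2 + 1) =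
      e - (b - k) + (b + (t - 1) * (a 2 + 1) - (k + (s - 1) * (a 2 + 1))) by ring]
    exact dvd_add hen.dvd hclass.dvd
  obtain ⟨rfl, rfl⟩ := eq_zero_and_eq_of_mem_window_of_dvd hs ht hwindow hmultiple
  have hbk : b = k := eq_of_modEq_of_mem_Icc hb hk (by simpa using he.add_right k)
  exact hne (by simp [hbk])

/-- The acyclic set of messages that gives the lower bound for the bar-ICP with `i = 2`: the
messages `(b, t)` with `b ≤ a (3 - t) + 1`. -/
def barAcyclicSet (K : ℕ) (a : ℕ → ℕ) : Finset (Msg K 2) :=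
  (Icc 1 (a 2 + 1) ×ˢ {1} ∪ Icc 1 (a 1 + 1) ×ˢ {2}).subtype _

theorem le_of_mem_barAcyclicSet {m : Msg K 2} (hm : m ∈ barAcyclicSet K a) :
    m.1.1 ≤ a (3 - m.1.2) + 1 := by
  obtain ⟨⟨b, t⟩, _⟩ := m
  simp only [barAcyclicSet, mem_subtype, mem_union, mem_product, mem_Icc, mem_singleton] at hm
  obtain ⟨⟨-, hb⟩, rfl⟩ | ⟨⟨-, hb⟩, rfl⟩ := hm <;> exact hb

theorem card_barAcyclicSet (hL : 1 ≤ L) (hK : K = L + a 1 + a 2 + 1) :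
    #(barAcyclicSet K a) = a 1 + a 2 + 2 := by
  have hdisjoint : Disjoint (Icc 1 (a 2 + 1) ×ˢ {1}) (Icc 1 (a 1 + 1) ×ˢ ({2} : Finset ℕ)) :=
    disjoint_product.2 (Or.inr (by simp))
  rw [barAcyclicSet, card_subtype, filter_true_of_mem, card_union_of_disjoint hdisjoint]
  · simp only [card_product, Nat.card_Icc, card_singleton]
    omega
  · simp only [mem_union, mem_product, mem_Icc, mem_singleton]
    omega

theorem isAcyclicSet_barAcyclicSet (hK : K = L + a 1 + a 2 + 1) :
    IsAcyclicSet (barWant K 2) (barKnown K 2 L a) (barAcyclicSet K a) := by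
  refine ⟨fun m => m.1.1, ?_⟩
  rintro ⟨⟨k, s⟩, hk, hs⟩ -
  refine ⟨⟨k, hk⟩, rfl, ?_⟩
  rintro ⟨⟨b, t⟩, hb, ht⟩ hmem hknown
  by_contra! hkb
  dsimp only at hk hb ht hkb
  have hbound : b ≤ a (3 - t) + 1 := le_of_mem_barAcyclicSet hmem
  rw [mem_Icc] at hk
  have hunknown : (b, t) ∉ knownIdx K 2 L a k :=
    (notMem_knownIdx_two_iff hK hb ht).2 ⟨b - k, ⟨by omega, by omega⟩, Int.ModEq.rfl⟩
  exact hunknown hknown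

end BarICP

/-- Theorem 5 of the paper: for the `(a_2,a_1)_L`-bar-ICP (the case
`i = 2`), if `a_1 + a_2 + 2` divides `K` then the optimal broadcast rate equals
exactly `a_1 + a_2 + 2`. -/
theorem stmt5 (L : ℕ) (hL : 1 ≤ L) (a : ℕ → ℕ)
    (K : ℕ) (hK : K = L + a 1 + a 2 + 1)
    (hdvd : (a 1 + a 2 + 2) ∣ K) :
    optRate (barWant K 2) (barKnown K 2 L a) = (a 1 : ℝ) + (a 2 : ℝ) + 2 := by
  have hcard := card_barAcyclicSet hL hK
  have hrate := (isAcyclicSet_barAcyclicSet hK).optRate_eq_card (isCliqueCover_barClique hK hdvd)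
    ((ZMod.card _).trans hcard.symm)
  rw [hrate, hcard]
  push_cast
  ring
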